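/- Let A₀ be a finite set, ρ : A₀ → ℝ with ρ_a ≥ 0 for all a, and π a nonnegative function on the nonempty subsets S ⊆ A₀, such that Σ_{S ⊆ A₀, S ≠ ∅} π(S) = Σ_{a ∈ A₀} ρ_a and, for every subset α ⊆ A₀, Σ_{a∈α} ρ_a ≤ Σ_{S : S ∩ α ≠ ∅} π(S). Then there exist nonnegative numbers y_a(S), defined for nonempty S ⊆ A₀ and a ∈ S, such that Σ_{S : a ∈ S} y_a(S) = ρ_a for every a ∈ A₀ and Σ_{a ∈ S} y_a(S) = π(S) for every nonempty S ⊆ A₀. -/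

import Mathlib

theorem aux_ineq {A : Type*} [Fintype A] [DecidableEq A]
    (ρ : A → ℝ) (π : Finset A → ℝ)
    (hπ : ∀ S : Finset A, S ≠ ∅ → 0 ≤ π S)
    (hcut : ∀ α : Finset A,
      ∑ a ∈ α, ρ a ≤ ∑ S ∈ Finset.univ.filter (fun S : Finset A => S ∩ α ≠ ∅), π S) :
    ∀ (n : ℕ) (c : A → ℝ) (m : Finset A → ℝ),
      (Finset.univ.filter (fun a => c a ≠ 0)).card = n → (∀ a, 0 ≤ c a) →
      (∀ S, S ≠ ∅ → 0 ≤ m S) → (∀ S, ∀ a ∈ S, c a ≤ m S) →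
      ∑ a, c a * ρ a ≤ ∑ S ∈ Finset.univ.filter (fun S : Finset A => S ≠ ∅), π S * m S := by
  intro n
  induction n using Nat.strong_induction_on with
  | _ n ih =>
  intro c m hn hc hm hcm
  set α := Finset.univ.filter (fun a => c a ≠ 0) with hα
  by_cases hne : α.Nonempty
  · obtain ⟨b, hb, hbm⟩ := Finset.exists_min_image α c hne
    have hb0 : c b ≠ 0 := by simpa [hα] using hb
    have key := ih (Finset.univ.filter (fun a => c a - (if a ∈ α then c b else 0) ≠ 0)).card
      (by
        rw [← hn]
        apply Finset.card_lt_card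
        rw [Finset.ssubset_iff_of_subset]
        · exact ⟨b, hb, by simp [hb]⟩
        · intro a ha
          by_contra h
          have h0 : c a = 0 := by simpa [hα] using h
          simp [h, h0] at ha)
      (fun a => c a - (if a ∈ α then c b else 0))
      (fun S => m S - (if S ∩ α ≠ ∅ then c b else 0)) rfl
      (by
        intro a
        by_cases h : a ∈ α
        · simpa [h] using hbm a h
        · simpa [h] using hc a)
      (by
        intro S hS
        by_cases h : S ∩ α ≠ ∅
        · obtain ⟨a, ha⟩ := Finset.nonempty_iff_ne_empty.mpr h
          rw [Finset.mem_inter] at ha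
          have h1 := hcm S a ha.1
          have h2 := hbm a ha.2
          simp only [h, ne_eq, not_false_eq_true, if_true]
          linarith
        · simp only [h, if_false]
          simpa using hm S hS)
      (by
        intro S a ha
        by_cases h : a ∈ α
        · have h' : S ∩ α ≠ ∅ := Finset.nonempty_iff_ne_empty.mp ⟨a, Finset.mem_inter.mpr ⟨ha, h⟩⟩
          simp only [h, h', ne_eq, not_false_eq_true, if_true]
          linarith [hcm S a ha]
        · have h0 : c a = 0 := by simpa [hα] using h
          simp only [h, if_false, h0]
          by_cases h : S ∩ α ≠ ∅
          · obtain ⟨a', ha'⟩ := Finset.nonempty_iff_ne_empty.mpr h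
            rw [Finset.mem_inter] at ha'
            have h1 := hcm S a' ha'.1
            have h2 := hbm a' ha'.2
            simp only [h, ne_eq, not_false_eq_true, if_true]
            linarith
          · simp only [h, if_false]
            simpa using hm S (Finset.ne_empty_of_mem ha))
    have e1 : ∑ a, (c a - (if a ∈ α then c b else 0)) * ρ a
        = ∑ a, c a * ρ a - c b * ∑ a ∈ α, ρ a := by
      simp only [sub_mul, Finset.sum_sub_distrib, ite_mul, zero_mul, Finset.mul_sum]
      congr 1
      rw [← Finset.sum_filter]
      simp
    have e2 : ∑ S ∈ Finset.univ.filter (fun S : Finset A => S ≠ ∅),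
          π S * (m S - (if S ∩ α ≠ ∅ then c b else 0))
        = ∑ S ∈ Finset.univ.filter (fun S : Finset A => S ≠ ∅), π S * m S
          - c b * ∑ S ∈ Finset.univ.filter (fun S : Finset A => S ∩ α ≠ ∅), π S := by
      simp only [mul_sub, Finset.sum_sub_distrib, mul_ite, mul_zero, Finset.mul_sum]
      congr 1
      rw [← Finset.sum_filter, Finset.filter_filter]
      refine Finset.sum_congr ?_ (fun _ _ => mul_comm _ _)
      ext S
      simp only [Finset.mem_filter, Finset.mem_univ, true_and]
      refine ⟨fun h => h.2, fun h => ⟨?_, h⟩⟩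
      rintro rfl
      simp at h
    rw [e1, e2] at key
    have := mul_le_mul_of_nonneg_left (hcut α) (hc b)
    linarith
  · have h0 : ∀ a, c a = 0 := by
      intro a
      by_contra h
      exact hne ⟨a, by simp [hα, h]⟩
    simp only [h0, zero_mul, Finset.sum_const_zero]
    apply Finset.sum_nonneg
    intro S hS
    have hS' : S ≠ ∅ := by simpa using hS
    exact mul_nonneg (hπ S hS') (hm S hS')

/-- Feasibility of the tie-breaking flow. Given nonnegative capacities `ρ`
and nonnegative tie probabilities `π` on nonempty subsets of `A₀` with total mass
`Σ_S π S = Σ_a ρ_a` and satisfying the cut conditions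
`Σ_{a∈α} ρ_a ≤ Σ_{S ∩ α ≠ ∅} π S` for every `α ⊆ A₀`, there is a nonnegative flow `y`
routing the mass of each nonempty subset `S` to its members and delivering exactly `ρ_a`
to each `a ∈ A₀`. -/
theorem stmt_10 {A₀ : Type*} [Fintype A₀] [DecidableEq A₀]
    (ρ : A₀ → ℝ) (hρ : ∀ a, 0 ≤ ρ a)
    (π : Finset A₀ → ℝ) (hπ : ∀ S : Finset A₀, S ≠ ∅ → 0 ≤ π S)
    (htotal : ∑ S ∈ Finset.univ.filter (fun S : Finset A₀ => S ≠ ∅), π S = ∑ a : A₀, ρ a)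
    (hcut : ∀ α : Finset A₀,
      ∑ a ∈ α, ρ a ≤ ∑ S ∈ Finset.univ.filter (fun S : Finset A₀ => S ∩ α ≠ ∅), π S) :
    ∃ y : Finset A₀ → A₀ → ℝ,
      (∀ S a, 0 ≤ y S a) ∧
      (∀ S a, a ∉ S → y S a = 0) ∧
      (∀ a : A₀, ∑ S ∈ Finset.univ.filter (fun S : Finset A₀ => a ∈ S ∧ S ≠ ∅), y S a = ρ a) ∧
      (∀ S : Finset A₀, S ≠ ∅ → ∑ a ∈ S, y S a = π S) := by
  classical
  let K : Set (Finset A₀ → A₀ → ℝ) := {y | (∀ S a, 0 ≤ y S a) ∧ (∀ S a, a ∉ S → y S a = 0) ∧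
    (∀ S : Finset A₀, S ≠ ∅ → ∑ a ∈ S, y S a = π S)}
  let L : (Finset A₀ → A₀ → ℝ) → A₀ → ℝ := fun y a =>
    ∑ S ∈ Finset.univ.filter (fun S : Finset A₀ => a ∈ S ∧ S ≠ ∅), y S a
  have hKclosed : IsClosed K := by
    have : K = (⋂ S, ⋂ a, {y | 0 ≤ y S a}) ∩ ((⋂ S, ⋂ a, ⋂ (_ : a ∉ S), {y | y S a = 0}) ∩
        (⋂ S : Finset A₀, ⋂ (_ : S ≠ ∅), {y | ∑ a ∈ S, y S a = π S})) := by
      ext y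
      simp [K]
    rw [this]
    refine IsClosed.inter ?_ (IsClosed.inter ?_ ?_)
    · exact isClosed_iInter fun S => isClosed_iInter fun a =>
        isClosed_le continuous_const (by fun_prop)
    · exact isClosed_iInter fun S => isClosed_iInter fun a => isClosed_iInter fun _ =>
        isClosed_eq (by fun_prop) continuous_const
    · exact isClosed_iInter fun S => isClosed_iInter fun _ =>
        isClosed_eq (by fun_prop) continuous_const
  have hKcompact : IsCompact K := by
    refine IsCompact.of_isClosed_subset
      (isCompact_Icc (a := (0 : Finset A₀ → A₀ → ℝ)) (b := fun S _ => |π S|)) hKclosed ?_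
    rintro y ⟨h1, h2, h3⟩
    refine ⟨fun S a => h1 S a, fun S a => ?_⟩
    by_cases ha : a ∈ S
    · have := Finset.single_le_sum (f := fun a => y S a) (fun i _ => h1 S i) ha
      rw [h3 S (Finset.ne_empty_of_mem ha)] at this
      exact this.trans (le_abs_self _)
    · rw [h2 S a ha]
      exact abs_nonneg _
  have hKconv : Convex ℝ K := by
    rintro x ⟨hx1, hx2, hx3⟩ z ⟨hz1, hz2, hz3⟩ s t hs ht hst
    refine ⟨fun S a => ?_, fun S a ha => ?_, fun S hS => ?_⟩
    · have := mul_nonneg hs (hx1 S a)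
      have := mul_nonneg ht (hz1 S a)
      simp only [Pi.add_apply, Pi.smul_apply, smul_eq_mul]
      linarith
    · simp [hx2 S a ha, hz2 S a ha]
    · simp only [Pi.add_apply, Pi.smul_apply, smul_eq_mul, Finset.sum_add_distrib,
        ← Finset.mul_sum, hx3 S hS, hz3 S hS]
      rw [← add_mul, hst, one_mul]
  have hLlin : IsLinearMap ℝ L := by
    constructor
    · intro x z
      ext a
      simp [L, Finset.sum_add_distrib]
    · intro s x
      ext a
      simp [L, Finset.mul_sum]
  have hLcont : Continuous L := by
    fun_prop
  by_cases hmem : ρ ∈ L '' K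
  · obtain ⟨y, ⟨h1, h2, h3⟩, hy⟩ := hmem
    exact ⟨y, h1, h2, fun a => congrFun hy a, h3⟩
  exfalso
  obtain ⟨f, u, hf1, hf2⟩ := geometric_hahn_banach_closed_point
    (hKconv.is_linear_image hLlin) (hKcompact.image hLcont).isClosed hmem
  let c : A₀ → ℝ := fun a => f (Pi.single a 1)
  have hfc : ∀ x : A₀ → ℝ, f x = ∑ a, c a * x a := by
    intro x
    conv_lhs => rw [pi_eq_sum_univ' x]
    rw [map_sum]
    refine Finset.sum_congr rfl fun a _ => ?_
    rw [map_smul, smul_eq_mul, mul_comm]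
  have hg : ∀ S : Finset A₀, ∃ a : Option A₀, S ≠ ∅ → ∃ b ∈ S, a = some b ∧ ∀ x ∈ S, c x ≤ c b := by
    intro S
    by_cases hS : S = ∅
    · exact ⟨none, fun h => absurd hS h⟩
    · obtain ⟨b, hb, hb'⟩ := Finset.exists_max_image S c (Finset.nonempty_iff_ne_empty.mpr hS)
      exact ⟨some b, fun _ => ⟨b, hb, rfl, hb'⟩⟩
  choose g hg using hg
  let m : Finset A₀ → ℝ := fun S => (g S).elim 0 c
  let y : Finset A₀ → A₀ → ℝ := fun S a => if a ∈ S ∧ g S = some a then π S else 0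
  have hyK : y ∈ K := by
    refine ⟨fun S a => ?_, fun S a ha => ?_, fun S hS => ?_⟩
    · simp only [y]
      split_ifs with h
      · exact hπ S (Finset.ne_empty_of_mem h.1)
      · exact le_rfl
    · simp [y, ha]
    · obtain ⟨b, hb, hgb, -⟩ := hg S hS
      rw [Finset.sum_eq_single b]
      · simp [y, hb, hgb]
      · intro a _ hab
        simp [y, hgb, Ne.symm hab]
      · exact fun h => absurd hb h
  have hval : f (L y) = ∑ S ∈ Finset.univ.filter (fun S : Finset A₀ => S ≠ ∅), π S * m S := by
    rw [hfc]
    simp only [L, Finset.mul_sum, Finset.sum_filter]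
    rw [Finset.sum_comm]
    refine Finset.sum_congr rfl fun S _ => ?_
    by_cases hS : S = ∅
    · simp [hS]
    · obtain ⟨b, hb, hgb, -⟩ := hg S hS
      rw [Finset.sum_eq_single b]
      · simp [y, hb, hgb, hS, m, mul_comm]
      · intro a _ hab
        simp [y, hgb, Ne.symm hab]
      · exact fun h => absurd (Finset.mem_univ _) h
  have h1 := hf1 (L y) ⟨y, hyK, rfl⟩
  have hk : ∀ a, 0 ≤ c a + ∑ b, |c b| := by
    intro a
    have := Finset.single_le_sum (f := fun b => |c b|) (fun i _ => abs_nonneg _) (Finset.mem_univ a)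
    have := neg_abs_le (c a)
    linarith
  have hcm : ∀ S : Finset A₀, ∀ a ∈ S, c a ≤ m S := by
    intro S a ha
    obtain ⟨b, hb, hgb, hmax⟩ := hg S (Finset.ne_empty_of_mem ha)
    simpa [m, hgb] using hmax a ha
  have h2 := aux_ineq ρ π hπ hcut _ (fun a => c a + ∑ b, |c b|) (fun S => m S + ∑ b, |c b|) rfl hk
    (by
      intro S hS
      obtain ⟨a, ha⟩ := Finset.nonempty_iff_ne_empty.mpr hS
      linarith [hk a, hcm S a ha])
    (by
      intro S a ha
      linarith [hcm S a ha])
  simp only [add_mul, mul_add, Finset.sum_add_distrib, ← Finset.mul_sum _ ρ] at h2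
  rw [← Finset.sum_mul _ π, htotal, ← hval, ← hfc] at h2
  linarith
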